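/- arXiv:2512.02149 — 3 statements merged into one kernel-verified Lean document; each statement's English description precedes it below -/
import Mathlib

section
/- Let k ≥ 1 and let D ⊆ R^k be a β-column set. The map x ↦ (x·g)_{g∈D} from R^k to R^D is injective; consequently the linear simplex β code S_k^β is a free R-linear code of rank k, i.e. of type (L_β(k); k, 0, …, 0), and has exactly q^(sk) codewords. -/
/-- A β-column set: a finite set `D ⊆ R^k` such that every `g ∈ D` has a unit coordinate,
and every vector of `R^k` with a unit coordinate is `u • g` for a unique unit `u` and a
unique `g ∈ D`. -/
def IsBetaColumnSet {R : Type} [CommRing R] {k : ℕ} (D : Finset (Fin k → R)) : Prop :=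
  (∀ g ∈ D, ∃ i, IsUnit (g i)) ∧
  (∀ w : Fin k → R, (∃ i, IsUnit (w i)) →
    ∃! ug : Rˣ × (Fin k → R), ug.2 ∈ D ∧ w = (ug.1 : R) • ug.2)

/-- If `γ` generates the maximal ideal and `γ ^ j ≠ 0`, passing from `R ⧸ ⟨γ ^ j⟩` to
`R ⧸ ⟨γ ^ (j + 1)⟩` multiplies the cardinality by that of the residue field. -/
theorem card_quotient_span_pow_succ {R : Type*} [CommRing R] [IsLocalRing R] {γ : R}
    (hmax : IsLocalRing.maximalIdeal R = Ideal.span {γ}) {j : ℕ} (hj : γ ^ j ≠ 0) :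
    Nat.card (R ⧸ Ideal.span {γ ^ (j + 1)}) =
      Nat.card (R ⧸ Ideal.span {γ}) * Nat.card (R ⧸ Ideal.span {γ ^ j}) := by
  have hle : Ideal.span {γ ^ (j + 1)} ≤ Ideal.span {γ ^ j} :=
    Ideal.span_singleton_le_span_singleton.2 (pow_dvd_pow γ j.le_succ)
  let φ : R →ₗ[R] R ⧸ Ideal.span {γ ^ (j + 1)} :=
    (Submodule.mkQ (Ideal.span {γ ^ (j + 1)})).comp (LinearMap.mulLeft R (γ ^ j))
  have hker : LinearMap.ker φ = Ideal.span {γ} := by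
    ext r
    have hr : r ∈ LinearMap.ker φ ↔ γ ^ (j + 1) ∣ γ ^ j * r := by
      rw [LinearMap.mem_ker, ← Ideal.mem_span_singleton]
      exact Submodule.Quotient.mk_eq_zero _
    rw [hr]
    constructor
    · rintro ⟨t, ht⟩
      have hγ : γ * t ∈ IsLocalRing.maximalIdeal R :=
        hmax ▸ Ideal.mul_mem_right _ _ (Ideal.mem_span_singleton_self γ)
      have hz : γ ^ j * (r - γ * t) = 0 := by rw [mul_sub, ht]; ring
      have hm : r - γ * t ∈ IsLocalRing.maximalIdeal R := by
        rw [IsLocalRing.mem_maximalIdeal, mem_nonunits_iff]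
        exact fun hu => hj ((hu.mul_left_eq_zero).1 hz)
      rw [← hmax]
      simpa using add_mem hm hγ
    · rw [Ideal.mem_span_singleton, pow_succ]
      exact mul_dvd_mul_left _
  have hrange : LinearMap.range φ =
      Submodule.map (Submodule.mkQ (Ideal.span {γ ^ (j + 1)})) (Ideal.span {γ ^ j}) := by
    rw [LinearMap.range_comp]
    congr 1
    ext r
    rw [LinearMap.mem_range, Ideal.mem_span_singleton]
    exact exists_congr fun _ => eq_comm
  rw [Submodule.card_eq_card_quotient_mul_card (LinearMap.range φ),
    ← Nat.card_congr φ.quotKerEquivRange.toEquiv, hker, hrange,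
    Nat.card_congr (Submodule.quotientQuotientEquivQuotient _ _ hle).toEquiv]

/-- A local ring whose maximal ideal is generated by `γ`, with `γ` nilpotent of index `s`, has
`q ^ s` elements, where `q` is the cardinality of the residue field. -/
theorem card_eq_card_quotient_pow {R : Type*} [CommRing R] [IsLocalRing R] {γ : R} {s : ℕ}
    (hmax : IsLocalRing.maximalIdeal R = Ideal.span {γ}) (hnil : γ ^ s = 0)
    (hne : ∀ j < s, γ ^ j ≠ 0) :
    Nat.card R = Nat.card (R ⧸ Ideal.span {γ}) ^ s := by
  have h : ∀ j ≤ s, Nat.card (R ⧸ Ideal.span {γ ^ j}) = Nat.card (R ⧸ Ideal.span {γ}) ^ j := by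
    intro j
    induction j with
    | zero =>
      intro _
      have : Subsingleton (R ⧸ Ideal.span {γ ^ 0}) :=
        Ideal.Quotient.subsingleton_iff.2 (by simp)
      rw [Nat.card_of_subsingleton 0, pow_zero]
    | succ j ih =>
      intro hj
      rw [card_quotient_span_pow_succ hmax (hne j hj), ih (Nat.le_of_succ_le hj), pow_succ']
  rw [← h s le_rfl, hnil, Ideal.span_singleton_zero]
  exact Nat.card_congr (Submodule.quotEquivOfEqBot (⊥ : Ideal R) rfl).symm.toEquiv

/-- A vector is determined by its dot products with the members of a β-column set. -/
theorem IsBetaColumnSet.dotProduct_injective {R : Type} [CommRing R] {k : ℕ}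
    {D : Finset (Fin k → R)} (hD : IsBetaColumnSet D) :
    Function.Injective
      (fun (x : Fin k → R) => (fun (g : {g : Fin k → R // g ∈ D}) => ∑ i, x i * g.1 i)) := by
  intro x y hxy
  funext i
  obtain ⟨⟨u, g⟩, ⟨hg, hug⟩, -⟩ := hD.2 (Pi.single i 1) ⟨i, by simp⟩
  have hdot : x ⬝ᵥ g = y ⬝ᵥ g := congrFun hxy ⟨g, hg⟩
  rw [← dotProduct_single_one x i, ← dotProduct_single_one y i, hug, dotProduct_smul,
    dotProduct_smul, hdot]

/-- The map `x ↦ (x·g)_{g∈D}` from `R^k` to `R^D` is injective; consequently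
the linear simplex β code `S_k^β` is a free `R`-linear code of rank `k`
(type `(L_β(k); k, 0, …, 0)`) with exactly `q^(sk)` codewords. -/
theorem stmt_9
    (R : Type) [CommRing R] [IsLocalRing R] [Fintype R]
    (γ : R) (s q : ℕ)
    (hs : 1 ≤ s)
    (hmax : IsLocalRing.maximalIdeal R = Ideal.span {γ})
    (hnil : γ ^ s = 0)
    (hnil' : 2 ≤ s → γ ^ (s - 1) ≠ 0)
    (hq : Nat.card (R ⧸ Ideal.span ({γ} : Set R)) = q)
    (k : ℕ) (hk : 1 ≤ k)
    (D : Finset (Fin k → R)) (hD : IsBetaColumnSet D) :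
    Function.Injective
      (fun (x : Fin k → R) => (fun (g : {g : Fin k → R // g ∈ D}) => ∑ i, x i * g.1 i)) ∧
    Nat.card {c : {g : Fin k → R // g ∈ D} → R |
        ∃ x : Fin k → R, c = fun g => ∑ i, x i * g.1 i}
      = q ^ (s * k) := by
  have hinj := hD.dotProduct_injective
  refine ⟨hinj, ?_⟩
  have hne : ∀ j < s, γ ^ j ≠ 0 := by
    intro j hj h0
    rcases Nat.lt_or_ge s 2 with hs2 | hs2
    · obtain rfl : j = 0 := by omega
      simp at h0
    · exact hnil' hs2 (pow_eq_zero_of_le (by omega) h0)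
  have hset : {c : {g : Fin k → R // g ∈ D} → R |
      ∃ x : Fin k → R, c = fun g => ∑ i, x i * g.1 i} =
      Set.range (fun (x : Fin k → R) (g : {g : Fin k → R // g ∈ D}) => ∑ i, x i * g.1 i) :=
    Set.ext fun _ => exists_congr fun _ => eq_comm
  rw [hset, Nat.card_range_of_injective hinj, Nat.card_fun, Nat.card_fin,
    card_eq_card_quotient_pow hmax hnil hne, hq, pow_mul]
end

section
/- Let k ≥ 2, let D ⊆ R^k be a β-column set, and let x ∈ R^k be nonzero with valuation ν(x) = t. Then: (i) x·g ∈ ⟨γ^t⟩ for every g ∈ D; (ii) the number of g ∈ D with x·g = 0 equals q^t·L_β(k−1); (iii) the number of g ∈ D with x·g ∈ ⟨γ^(t+1)⟩ equals q^(s−1)·L_β(k−1); and (iv) the number of g ∈ D with x·g ∉ ⟨γ^(t+1)⟩ equals q^(s(k−1)), and all these values lie in ⟨γ^t⟩ \ ⟨γ^(t+1)⟩. -/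
/-- `L_β(j) = q^((s−1)(j−1))·(q^j − 1)/(q − 1)`, written via the geometric sum. -/
def Lbeta (q s j : ℕ) : ℕ := q ^ ((s - 1) * (j - 1)) * ∑ i ∈ Finset.range j, q ^ i

/-- Counting through unit multiples: for a unit-invariant property, every element of a
β-column set accounts for exactly `|Rˣ|` vectors with a unit coordinate. -/
theorem IsBetaColumnSet.card_units_mul_card {R : Type} [CommRing R] {k : ℕ}
    {D : Finset (Fin k → R)} (hD : IsBetaColumnSet D) (P : (Fin k → R) → Prop)
    (hP : ∀ (u : Rˣ) (w : Fin k → R), P ((u : R) • w) ↔ P w) :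
    Nat.card Rˣ * Nat.card {g : Fin k → R // g ∈ D ∧ P g} =
      Nat.card {w : Fin k → R // (∃ i, IsUnit (w i)) ∧ P w} := by
  rw [← Nat.card_prod]
  have hunit : ∀ (u : Rˣ), ∀ g ∈ D, ∃ i, IsUnit (((u : R) • g) i) := by
    intro u g hg
    obtain ⟨i, hi⟩ := hD.1 g hg
    exact ⟨i, by simpa using u.isUnit.mul hi⟩
  refine Nat.card_eq_of_bijective
    (fun p => ⟨(p.1 : R) • p.2.1, hunit p.1 p.2.1 p.2.2.1, (hP _ _).2 p.2.2.2⟩) ⟨?_, ?_⟩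
  · rintro ⟨u, g, hg⟩ ⟨v, h, hh⟩ heq
    have heq' : (u : R) • g = (v : R) • h := congrArg Subtype.val heq
    have := (hD.2 _ (hunit u g hg.1)).unique (y₁ := (u, g)) (y₂ := (v, h))
      ⟨hg.1, rfl⟩ ⟨hh.1, heq'⟩
    simp_all
  · rintro ⟨w, hw, hPw⟩
    obtain ⟨⟨u, g⟩, ⟨hg, rfl⟩, -⟩ := hD.2 w hw
    exact ⟨(u, ⟨g, hg, (hP u g).1 hPw⟩), rfl⟩

/-- A linear form with a unit coefficient takes values in `S ⊆ J` at `|S|·|J|^(k-1)` vectors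
with coordinates in the ideal `J`. -/
theorem card_dotProduct_mem {R : Type} [CommRing R] [Finite R] {k : ℕ}
    (y : Fin k → R) (i₀ : Fin k) (hy : IsUnit (y i₀)) (J : Ideal R) (S : Set R)
    (hS : S ⊆ J) :
    Nat.card {w : Fin k → R // (∀ i, w i ∈ J) ∧ ∑ i, y i * w i ∈ S} =
      Nat.card S * Nat.card J ^ (k - 1) := by
  classical
  obtain ⟨u, hu⟩ := hy
  have hsum (w : Fin k → R) :
      ∑ i, y i * w i = y i₀ * w i₀ + ∑ i ∈ Finset.univ.erase i₀, y i * w i :=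
    (Finset.add_sum_erase _ _ (Finset.mem_univ i₀)).symm
  let T : Fin k → Set R := Function.update (fun _ => (J : Set R)) i₀ S
  have hT : Nat.card (∀ i, T i) = Nat.card S * Nat.card J ^ (k - 1) := by
    rw [Nat.card_pi, ← Finset.mul_prod_erase _ _ (Finset.mem_univ i₀)]
    congr 1
    · simp [T]
    · rw [Finset.prod_congr rfl (g := fun _ => Nat.card J)]
      · simp
      · intro i hi
        simp [T, Function.update_of_ne (Finset.ne_of_mem_erase hi)]
  rw [← hT]
  refine Nat.card_eq_of_bijective
    (fun w i => ⟨Function.update w.1 i₀ (∑ i, y i * w.1 i) i, ?_⟩) ⟨?_, ?_⟩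
  · by_cases h : i = i₀
    · subst h; simpa [T] using w.2.2
    · simpa [T, h] using w.2.1 i
  · rintro ⟨w, hw⟩ ⟨v, hv⟩ heq
    have heq' (i : Fin k) : Function.update w i₀ (∑ i, y i * w i) i =
        Function.update v i₀ (∑ i, y i * v i) i := congrArg Subtype.val (congrFun heq i)
    have hne : ∀ i, i ≠ i₀ → w i = v i := fun i hi => by simpa [hi] using heq' i
    have h₀ := heq' i₀
    simp only [Function.update_self] at h₀
    rw [hsum, hsum, Finset.sum_congr rfl (g := fun i => y i * v i)
      (fun i hi => by rw [hne i (Finset.ne_of_mem_erase hi)]), ← hu] at h₀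
    have h₁ : w i₀ = v i₀ := u.isUnit.mul_left_cancel (add_right_cancel h₀)
    refine Subtype.ext (funext fun i => ?_)
    by_cases h : i = i₀
    · subst h; exact h₁
    · exact hne i h
  · intro v
    have hvJ (i : Fin k) : (v i : R) ∈ J := by
      by_cases h : i = i₀
      · subst h; exact hS (by simpa [T] using (v i).2)
      · simpa [T, h] using (v i).2
    have hvS : (v i₀ : R) ∈ S := by simpa [T] using (v i₀).2
    let w : Fin k → R := Function.update (fun i => (v i : R)) i₀
      (↑u⁻¹ * ((v i₀ : R) - ∑ i ∈ Finset.univ.erase i₀, y i * v i))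
    have hw : ∑ i, y i * w i = v i₀ := by
      rw [hsum, Finset.sum_congr rfl (g := fun i => y i * v i)
        (fun i hi => by simp [w, Finset.ne_of_mem_erase hi])]
      simp [w, ← hu]
    refine ⟨⟨w, fun i => ?_, hw ▸ hvS⟩, funext fun i => Subtype.ext ?_⟩
    · by_cases h : i = i₀
      · subst h
        simp only [w, Function.update_self]
        exact J.mul_mem_left _ (J.sub_mem (hvJ _)
          (J.sum_mem fun j _ => J.mul_mem_left _ (hvJ j)))
      · simpa [w, h] using hvJ i
    · by_cases h : i = i₀
      · subst h; simpa using hw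
      · simp [w, h]

theorem Submodule.card_map_mul_card_inf_ker {R M N : Type*} [Ring R] [AddCommGroup M]
    [Module R M] [AddCommGroup N] [Module R N] (f : M →ₗ[R] N) (p : Submodule R M) :
    Nat.card (p.map f) * Nat.card (p ⊓ LinearMap.ker f : Submodule R M) = Nat.card p := by
  rw [Submodule.card_eq_card_quotient_mul_card (LinearMap.ker (f.domRestrict p)),
    Nat.card_congr (f.domRestrict p).quotKerEquivRange.toEquiv, LinearMap.range_domRestrict,
    mul_comm]
  congr 1
  rw [LinearMap.ker_domRestrict]
  refine Nat.card_congr ⟨fun a => ⟨⟨a.1, a.2.1⟩, a.2.2⟩, fun a => ⟨a.1.1, a.1.2, a.2⟩,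
    fun _ => rfl, fun _ => rfl⟩

theorem not_isUnit_of_pow_mul_eq_zero {R : Type*} [CommRing R] {γ : R} {j : ℕ}
    (hj : γ ^ j ≠ 0) {a : R} (h : γ ^ j * a = 0) : ¬ IsUnit a := fun ha => hj (ha.mul_left_eq_zero.1 h)

section ChainRing

variable {R : Type} [CommRing R] [IsLocalRing R] {γ : R}

theorem pow_eq_zero_of_isUnit_of_mem_span
    (hmax : IsLocalRing.maximalIdeal R = Ideal.span {γ}) {j : ℕ} {a : R} (ha : IsUnit a)
    (h : γ ^ j * a ∈ Ideal.span ({γ ^ (j + 1)} : Set R)) : γ ^ j = 0 := by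
  obtain ⟨c, hc⟩ := Ideal.mem_span_singleton'.1 h
  have hγ : γ * c ∈ IsLocalRing.maximalIdeal R := by
    rw [hmax]; exact Ideal.mul_mem_right _ _ (Ideal.mem_span_singleton_self γ)
  have hu : IsUnit (a - γ * c) := by
    by_contra hn
    have := (IsLocalRing.maximalIdeal R).add_mem ((IsLocalRing.mem_maximalIdeal _).2 hn) hγ
    rw [sub_add_cancel] at this
    exact (IsLocalRing.mem_maximalIdeal a).1 this ha
  exact (hu.mul_left_eq_zero).1 (by linear_combination -hc)

theorem card_compl_maximalIdeal :
    Nat.card {a : R | a ∉ IsLocalRing.maximalIdeal R} = Nat.card Rˣ := by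
  refine (Nat.card_eq_of_bijective
    (fun u : Rˣ => (⟨u, by simp⟩ : {a : R | a ∉ IsLocalRing.maximalIdeal R})) ⟨?_, ?_⟩).symm
  · exact fun u v h => Units.ext (congrArg Subtype.val h)
  · intro a
    obtain ⟨u, hu⟩ : IsUnit a.1 := by simpa using a.2
    exact ⟨u, Subtype.ext hu⟩

variable [Finite R]

theorem card_span_pow_eq_mul (hmax : IsLocalRing.maximalIdeal R = Ideal.span {γ}) {j : ℕ}
    (hj : γ ^ j ≠ 0) :
    Nat.card (Ideal.span ({γ ^ j} : Set R)) =
      Nat.card (R ⧸ Ideal.span ({γ} : Set R)) *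
        Nat.card (Ideal.span ({γ ^ (j + 1)} : Set R)) := by
  let f : R →ₗ[R] R := LinearMap.mulLeft R (γ ^ j)
  have hker : LinearMap.ker f ≤ Ideal.span {γ} := by
    intro a ha
    rw [← hmax, IsLocalRing.mem_maximalIdeal]
    exact not_isUnit_of_pow_mul_eq_zero hj ha
  have htop := Submodule.card_map_mul_card_inf_ker f ⊤
  have hm := Submodule.card_map_mul_card_inf_ker f (Ideal.span {γ})
  have hmap₁ : Submodule.map f ⊤ = Ideal.span {γ ^ j} := by
    ext a; simp [f, Ideal.mem_span_singleton', mul_comm]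
  have hmap₂ : Submodule.map f (Ideal.span {γ}) = Ideal.span {γ ^ (j + 1)} := by
    ext a
    simp [f, Ideal.mem_span_singleton', pow_succ, mul_left_comm]
  rw [hmap₁, top_inf_eq] at htop
  rw [hmap₂, inf_eq_right.2 hker] at hm
  have hR := Submodule.card_eq_card_quotient_mul_card (Ideal.span ({γ} : Set R))
  have hpos : 0 < Nat.card (LinearMap.ker f) := Nat.card_pos
  refine Nat.eq_of_mul_eq_mul_right hpos ?_
  rw [htop, mul_assoc, hm, mul_comm, ← hR]
  exact Nat.card_congr Submodule.topEquiv.toEquiv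

theorem card_span_pow (hmax : IsLocalRing.maximalIdeal R = Ideal.span {γ}) {s : ℕ}
    (hnil : γ ^ s = 0) (hne : ∀ j < s, γ ^ j ≠ 0) (i j : ℕ) (hij : i + j = s) :
    Nat.card (Ideal.span ({γ ^ j} : Set R)) =
      Nat.card (R ⧸ Ideal.span ({γ} : Set R)) ^ i := by
  induction i generalizing j with
  | zero =>
    obtain rfl : j = s := by omega
    simp [hnil]
  | succ i ih =>
    rw [card_span_pow_eq_mul hmax (hne j (by omega)), ih (j + 1) (by omega), pow_succ']

theorem card_annihilator_pow (hmax : IsLocalRing.maximalIdeal R = Ideal.span {γ}) {s : ℕ}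
    (hnil : γ ^ s = 0) (hne : ∀ j < s, γ ^ j ≠ 0) {t : ℕ} (ht : t ≤ s) :
    Nat.card {a : R | γ ^ t * a = 0} = Nat.card (R ⧸ Ideal.span ({γ} : Set R)) ^ t := by
  have htop := Submodule.card_map_mul_card_inf_ker (LinearMap.mulLeft R (γ ^ t)) ⊤
  have hmap : Submodule.map (LinearMap.mulLeft R (γ ^ t)) ⊤ = Ideal.span {γ ^ t} := by
    ext a; simp [Ideal.mem_span_singleton', mul_comm]
  have h0 := card_span_pow hmax hnil hne s 0 (by omega)
  rw [pow_zero, Ideal.span_singleton_one] at h0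
  rw [hmap, top_inf_eq, card_span_pow hmax hnil hne (s - t) t (by omega), h0] at htop
  have := Finite.of_surjective _ (Ideal.Quotient.mk_surjective (I := Ideal.span ({γ} : Set R)))
  have hq : 0 < Nat.card (R ⧸ Ideal.span ({γ} : Set R)) := Nat.card_pos
  refine Nat.eq_of_mul_eq_mul_left (pow_pos hq (s - t)) ?_
  rw [← pow_add, Nat.sub_add_cancel ht]
  exact htop

theorem card_units_add_card_maximalIdeal :
    Nat.card Rˣ + Nat.card (IsLocalRing.maximalIdeal R) = Nat.card R := by
  classical
  rw [← card_compl_maximalIdeal, add_comm, ← Nat.card_sum]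
  exact Nat.card_congr (Equiv.sumCompl (· ∈ IsLocalRing.maximalIdeal R))

theorem card_unimodular_dotProduct_mem {k : ℕ} (y : Fin k → R) (i₀ : Fin k)
    (hy : IsUnit (y i₀)) (S : Set R) (hS : S ⊆ IsLocalRing.maximalIdeal R) :
    Nat.card {w : Fin k → R // (∃ i, IsUnit (w i)) ∧ ∑ i, y i * w i ∈ S} +
      Nat.card S * Nat.card (IsLocalRing.maximalIdeal R) ^ (k - 1) =
      Nat.card S * Nat.card R ^ (k - 1) := by
  classical
  have htop := card_dotProduct_mem y i₀ hy ⊤ S (by simp)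
  rw [Nat.card_congr (Submodule.topEquiv (R := R) (M := R)).toEquiv] at htop
  rw [← card_dotProduct_mem y i₀ hy _ S hS, ← htop, ← Nat.card_sum]
  refine Nat.card_congr ((Equiv.sumCongr ?_ ?_).trans (Equiv.sumCompl
    (fun w : {w : Fin k → R // (∀ i, w i ∈ (⊤ : Ideal R)) ∧ ∑ i, y i * w i ∈ S} =>
      ∃ i, IsUnit (w.1 i))))
  · exact ⟨fun w => ⟨⟨w.1, by simp, w.2.2⟩, w.2.1⟩, fun w => ⟨w.1.1, w.2, w.1.2.2⟩,
      fun _ => rfl, fun _ => rfl⟩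
  · exact ⟨fun w => ⟨⟨w.1, by simp, w.2.2⟩, by simpa using w.2.1⟩,
      fun w => ⟨w.1.1, by simpa using w.2, w.1.2.2⟩, fun _ => rfl, fun _ => rfl⟩

end ChainRing

/-- Solving the unit-multiple count for the number of columns. -/
theorem eq_mul_Lbeta_of_mul_add_eq {q s k U N A : ℕ} (hq : 2 ≤ q) (hs : 1 ≤ s) (hk : 2 ≤ k)
    (hU : U + q ^ (s - 1) = q ^ s)
    (h : U * A + N * (q ^ (s - 1)) ^ (k - 1) = N * (q ^ s) ^ (k - 1)) :
    A = N * Lbeta q s (k - 1) := by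
  obtain ⟨p, rfl⟩ : ∃ p, q = p + 1 := ⟨q - 1, by omega⟩
  obtain ⟨r, rfl⟩ : ∃ r, s = r + 1 := ⟨s - 1, by omega⟩
  obtain ⟨n, rfl⟩ : ∃ n, k = n + 2 := ⟨k - 2, by omega⟩
  simp only [Lbeta, Nat.add_sub_cancel, show n + 2 - 1 = n + 1 by omega] at *
  have hgeom := geom_sum_mul_add p (n + 1)
  generalize ∑ i ∈ Finset.range (n + 1), (p + 1) ^ i = G at *
  have hU' : U = (p + 1) ^ r * p := by
    have : (p + 1) ^ (r + 1) = (p + 1) ^ r * p + (p + 1) ^ r := by ring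
    omega
  have hpos : 0 < (p + 1) ^ r * p := Nat.mul_pos (by positivity) (by omega)
  refine Nat.eq_of_mul_eq_mul_left hpos ?_
  have hpow : ((p + 1) ^ (r + 1)) ^ (n + 1) = ((p + 1) ^ r) ^ (n + 1) * (G * p + 1) := by
    rw [hgeom, pow_succ (p + 1) r, mul_pow]
  rw [hU', hpow] at h
  have hr : (p + 1) ^ (r * n) = ((p + 1) ^ r) ^ n := pow_mul _ _ _
  rw [hr]
  refine Nat.add_right_cancel (h.trans ?_)
  ring

/-- For `k ≥ 2`, a β-column set `D ⊆ R^k`, and nonzero `x ∈ R^k` with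
valuation `ν(x) = t`: (i) `x·g ∈ ⟨γ^t⟩` for all `g ∈ D`; (ii) exactly `q^t·L_β(k−1)`
elements `g ∈ D` satisfy `x·g = 0`; (iii) exactly `q^(s−1)·L_β(k−1)` elements satisfy
`x·g ∈ ⟨γ^(t+1)⟩`; (iv) exactly `q^(s(k−1))` elements satisfy `x·g ∉ ⟨γ^(t+1)⟩`, these
values lying in `⟨γ^t⟩ \ ⟨γ^(t+1)⟩`. -/
theorem stmt_11
    (R : Type) [CommRing R] [IsLocalRing R] [Fintype R]
    (γ : R) (s q : ℕ)
    (hs : 1 ≤ s)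
    (hmax : IsLocalRing.maximalIdeal R = Ideal.span {γ})
    (hnil : γ ^ s = 0)
    (hnil' : 2 ≤ s → γ ^ (s - 1) ≠ 0)
    (hq : Nat.card (R ⧸ Ideal.span ({γ} : Set R)) = q)
    (k : ℕ) (hk : 2 ≤ k)
    (D : Finset (Fin k → R)) (hD : IsBetaColumnSet D)
    (x : Fin k → R) (hx : x ≠ 0) (t : ℕ)
    (hval1 : ∀ i, x i ∈ Ideal.span ({γ ^ t} : Set R))
    (hval2 : ∃ i, x i ∉ Ideal.span ({γ ^ (t + 1)} : Set R)) :
    (∀ g ∈ D, (∑ i, x i * g i) ∈ Ideal.span ({γ ^ t} : Set R)) ∧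
    Nat.card {g : Fin k → R // g ∈ D ∧ ∑ i, x i * g i = 0} = q ^ t * Lbeta q s (k - 1) ∧
    Nat.card {g : Fin k → R //
        g ∈ D ∧ (∑ i, x i * g i) ∈ Ideal.span ({γ ^ (t + 1)} : Set R)}
      = q ^ (s - 1) * Lbeta q s (k - 1) ∧
    Nat.card {g : Fin k → R //
        g ∈ D ∧ (∑ i, x i * g i) ∉ Ideal.span ({γ ^ (t + 1)} : Set R)}
      = q ^ (s * (k - 1)) := by
  have hne : ∀ j < s, γ ^ j ≠ 0 := by
    intro j hj h0
    rcases Nat.lt_or_ge s 2 with h | h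
    · obtain rfl : j = 0 := by omega
      simp at h0
    · exact hnil' h (by rw [show s - 1 = j + (s - 1 - j) by omega, pow_add, h0, zero_mul])
  obtain ⟨i₀, hi₀⟩ := hval2
  have ht : t < s := by
    by_contra hts
    have h0 : γ ^ t = 0 := pow_eq_zero_of_le (not_lt.1 hts) hnil
    have := hval1 i₀
    rw [h0, Ideal.span_singleton_eq_bot.2 rfl, Ideal.mem_bot] at this
    exact hi₀ (this ▸ Ideal.zero_mem _)
  choose y hy using fun i => Ideal.mem_span_singleton.1 (hval1 i)
  have hmem (a : R) : γ ^ t * a ∈ Ideal.span ({γ ^ (t + 1)} : Set R) ↔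
      a ∈ IsLocalRing.maximalIdeal R := by
    constructor
    · intro h
      rw [IsLocalRing.mem_maximalIdeal]
      exact fun ha => hne t ht (pow_eq_zero_of_isUnit_of_mem_span hmax ha h)
    · rw [hmax, Ideal.mem_span_singleton, Ideal.mem_span_singleton, pow_succ]
      exact mul_dvd_mul_left _
  have hyu : IsUnit (y i₀) := by
    rw [hy, hmem] at hi₀
    simpa using hi₀
  have hdot (w : Fin k → R) : ∑ i, x i * w i = γ ^ t * ∑ i, y i * w i := by
    simp [hy, Finset.mul_sum, mul_assoc]
  have hsmul (u : Rˣ) (w : Fin k → R) :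
      ∑ i, y i * ((u : R) • w) i = u * ∑ i, y i * w i := by
    simp [Finset.mul_sum, mul_left_comm]
  have hcardR : Nat.card R = q ^ s := by
    have h0 := card_span_pow hmax hnil hne s 0 (by omega)
    rw [pow_zero, Ideal.span_singleton_one, hq] at h0
    rw [← h0]
    exact Nat.card_congr (Submodule.topEquiv (R := R) (M := R)).symm.toEquiv
  have hcardm : Nat.card (IsLocalRing.maximalIdeal R) = q ^ (s - 1) := by
    have h1 := card_span_pow hmax hnil hne (s - 1) 1 (by omega)
    rwa [pow_one, hq, ← hmax] at h1
  have hU : Nat.card Rˣ + q ^ (s - 1) = q ^ s := by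
    rw [← hcardm, ← hcardR]
    exact card_units_add_card_maximalIdeal
  have hq2 : 2 ≤ q := by
    have : Nontrivial (R ⧸ Ideal.span ({γ} : Set R)) :=
      Ideal.Quotient.nontrivial_iff.2 (hmax ▸ Ideal.IsPrime.ne_top inferInstance)
    rw [← hq]
    exact Finite.one_lt_card
  have hcount (S : Set R) (hS : S ⊆ IsLocalRing.maximalIdeal R)
      (hSu : ∀ (u : Rˣ) (a : R), (u : R) * a ∈ S ↔ a ∈ S) :
      Nat.card {g : Fin k → R // g ∈ D ∧ ∑ i, y i * g i ∈ S} =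
        Nat.card S * Lbeta q s (k - 1) := by
    refine eq_mul_Lbeta_of_mul_add_eq hq2 hs hk hU ?_
    rw [hD.card_units_mul_card (fun g => ∑ i, y i * g i ∈ S)
      (fun u w => by rw [hsmul, hSu]), ← hcardR, ← hcardm]
    exact card_unimodular_dotProduct_mem y i₀ hyu S hS
  simp only [hdot, hmem]
  refine ⟨fun g _ => Ideal.mul_mem_right _ _ (Ideal.mem_span_singleton_self _), ?_, ?_, ?_⟩
  · have hann := card_annihilator_pow hmax hnil hne ht.le
    rw [hq] at hann
    rw [← hann]
    refine hcount {a | γ ^ t * a = 0} (fun a ha => ?_) (fun u a => ?_)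
    · exact (IsLocalRing.mem_maximalIdeal a).2 (not_isUnit_of_pow_mul_eq_zero (hne t ht) ha)
    · simp [mul_left_comm]
  · rw [← hcardm]
    exact hcount (IsLocalRing.maximalIdeal R) subset_rfl
      (fun u a => Ideal.unit_mul_mem_iff_mem _ u.isUnit)
  · have hS := card_dotProduct_mem y i₀ hyu ⊤
      {a : R | a ∉ IsLocalRing.maximalIdeal R} (by simp)
    rw [card_compl_maximalIdeal, Nat.card_congr (Submodule.topEquiv (R := R) (M := R)).toEquiv, hcardR,
      ← pow_mul] at hS
    refine Nat.eq_of_mul_eq_mul_left (Nat.card_pos (α := Rˣ)) ?_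
    rw [hD.card_units_mul_card (fun g => ∑ i, y i * g i ∉ IsLocalRing.maximalIdeal R)
      (fun u w => by rw [hsmul, Ideal.unit_mul_mem_iff_mem _ u.isUnit]), ← hS]
    refine Nat.card_congr (Equiv.subtypeEquivRight fun w => and_congr_left fun hw => ?_)
    simp only [Submodule.mem_top, implies_true, iff_true]
    by_contra! hn
    exact hw (Ideal.sum_mem _ fun i _ => Ideal.mul_mem_left _ _
      ((IsLocalRing.mem_maximalIdeal _).2 (hn i)))
end

section
/- Let s ≥ 2, k ≥ 2, and let D ⊆ R^k be a β-column set. Then exactly q^k − 1 elements x ∈ R^k satisfy ∑_{g∈D} w_Hom(x·g) = q^(sk−1), exactly q^(sk) − q^k elements x ∈ R^k satisfy ∑_{g∈D} w_Hom(x·g) = q^(sk−k−1)·(q^k − 1), and exactly one (x = 0) satisfies ∑_{g∈D} w_Hom(x·g) = 0; these two nonzero weights are distinct, and in particular the minimum homogeneous weight of S_k^β is q^(sk−k−1)·(q^k − 1). -/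
-- The homogeneous weight on a finite chain ring `R` with maximal ideal `⟨γ⟩`, nilpotency
-- index `s` and residue field of cardinality `q`.
open Classical in
noncomputable def wHom {R : Type} [CommRing R] (γ : R) (s q : ℕ) (y : R) : ℕ :=
  if y = 0 then 0
  else if y ∈ Ideal.span ({γ ^ (s - 1)} : Set R) then q ^ (s - 1)
  else (q - 1) * q ^ (s - 2)

section ChainRing

variable {R : Type} [CommRing R] {γ : R} {s q : ℕ}

theorem LinearMap.natCard_eq_ker_mul_range {A M N : Type*} [Ring A] [AddCommGroup M] [Module A M]
    [AddCommGroup N] [Module A N] (f : M →ₗ[A] N) :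
    Nat.card M = Nat.card (LinearMap.ker f) * Nat.card (LinearMap.range f) := by
  rw [Submodule.card_eq_card_quotient_mul_card (LinearMap.ker f),
    Nat.card_congr f.quotKerEquivRange.toEquiv]

theorem not_isUnit_iff_dvd [IsLocalRing R]
    (hmax : IsLocalRing.maximalIdeal R = Ideal.span {γ}) (y : R) : ¬ IsUnit y ↔ γ ∣ y := by
  rw [← mem_nonunits_iff, ← IsLocalRing.mem_maximalIdeal, hmax, Ideal.mem_span_singleton]

/-- Every nonzero element is a unit times a power of `γ` with exponent less than `s`. -/
theorem exists_eq_pow_mul_isUnit [IsLocalRing R]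
    (hmax : IsLocalRing.maximalIdeal R = Ideal.span {γ}) (hnil : γ ^ s = 0)
    {y : R} (hy : y ≠ 0) : ∃ j < s, ∃ u, IsUnit u ∧ y = γ ^ j * u := by
  classical
  have hex : ∃ n, ¬ γ ^ n ∣ y := ⟨s, by rwa [hnil, zero_dvd_iff]⟩
  have hpos : Nat.find hex ≠ 0 := fun h => by
    have := Nat.find_spec hex
    simp [h] at this
  obtain ⟨j, hj⟩ := Nat.exists_eq_succ_of_ne_zero hpos
  have hjs : Nat.find hex ≤ s := Nat.find_min' hex (by rwa [hnil, zero_dvd_iff])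
  obtain ⟨u, hu⟩ : γ ^ j ∣ y := not_not.1 (Nat.find_min hex (by omega : j < Nat.find hex))
  refine ⟨j, by omega, u, ?_, hu⟩
  by_contra hnu
  obtain ⟨v, rfl⟩ := (not_isUnit_iff_dvd hmax u).1 hnu
  refine Nat.find_spec hex ?_
  rw [hj]
  exact ⟨v, by rw [hu, pow_succ, mul_assoc]⟩

/-- Every nonzero element divides `γ ^ (s - 1)`. -/
theorem dvd_pow_pred_of_ne_zero [IsLocalRing R]
    (hmax : IsLocalRing.maximalIdeal R = Ideal.span {γ}) (hnil : γ ^ s = 0)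
    {y : R} (hy : y ≠ 0) : y ∣ γ ^ (s - 1) := by
  obtain ⟨j, hj, u, hu, rfl⟩ := exists_eq_pow_mul_isUnit hmax hnil hy
  exact hu.mul_right_dvd.2 (pow_dvd_pow γ (by omega))

/-- The annihilator of `γ` is generated by `γ ^ (s - 1)`. -/
theorem ker_mulLeft_eq_span [IsLocalRing R] (hs : 1 ≤ s)
    (hmax : IsLocalRing.maximalIdeal R = Ideal.span {γ}) (hnil : γ ^ s = 0)
    (hnil' : γ ^ (s - 1) ≠ 0) :
    LinearMap.ker (LinearMap.mulLeft R γ) = Ideal.span {γ ^ (s - 1)} := by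
  ext y
  rw [LinearMap.mem_ker, LinearMap.mulLeft_apply, Ideal.mem_span_singleton]
  constructor
  · intro h
    rcases eq_or_ne y 0 with rfl | hy
    · exact dvd_zero _
    obtain ⟨j, hj, u, hu, rfl⟩ := exists_eq_pow_mul_isUnit hmax hnil hy
    rw [← mul_assoc, hu.mul_left_eq_zero, ← pow_succ'] at h
    have : s - 1 ≤ j := by
      by_contra hlt
      exact hnil' (pow_eq_zero_of_le (by omega : j + 1 ≤ s - 1) h)
    exact (pow_dvd_pow γ this).mul_right u
  · rintro ⟨u, rfl⟩
    rw [← mul_assoc, ← pow_succ', Nat.sub_add_cancel hs, hnil, zero_mul]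

theorem range_mulLeft_eq_span (a : R) :
    LinearMap.range (LinearMap.mulLeft R a) = Ideal.span {a} := by
  ext y
  rw [Ideal.mem_span_singleton]
  exact ⟨fun ⟨r, hr⟩ => ⟨r, hr.symm⟩, fun ⟨r, hr⟩ => ⟨r, hr.symm⟩⟩

theorem natCard_span_pow_pred [IsLocalRing R] (hs : 1 ≤ s)
    (hmax : IsLocalRing.maximalIdeal R = Ideal.span {γ}) (hnil : γ ^ s = 0)
    (hnil' : γ ^ (s - 1) ≠ 0) (hq : Nat.card (R ⧸ Ideal.span ({γ} : Set R)) = q) :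
    Nat.card (Ideal.span ({γ ^ (s - 1)} : Set R)) = q := by
  have hker : LinearMap.ker (LinearMap.mulLeft R (γ ^ (s - 1))) = Ideal.span {γ} := by
    ext y
    rw [LinearMap.mem_ker, LinearMap.mulLeft_apply, Ideal.mem_span_singleton,
      ← not_isUnit_iff_dvd hmax]
    constructor
    · exact fun h hu => hnil' (hu.mul_left_eq_zero.1 h)
    · intro h
      obtain ⟨u, rfl⟩ := (not_isUnit_iff_dvd hmax y).1 h
      rw [← mul_assoc, ← pow_succ, Nat.sub_add_cancel hs, hnil, zero_mul]
  rw [← range_mulLeft_eq_span, ← hq, ← hker]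
  exact (Nat.card_congr (LinearMap.quotKerEquivRange _).toEquiv).symm

theorem natCard_span_pow [IsLocalRing R] (hs : 1 ≤ s)
    (hmax : IsLocalRing.maximalIdeal R = Ideal.span {γ}) (hnil : γ ^ s = 0)
    (hnil' : γ ^ (s - 1) ≠ 0) (hq : Nat.card (R ⧸ Ideal.span ({γ} : Set R)) = q)
    {j : ℕ} (hj : j ≤ s) : Nat.card (Ideal.span ({γ ^ j} : Set R)) = q ^ (s - j) := by
  induction hj using Nat.decreasingInduction with
  | self =>
    rw [hnil, Ideal.span_singleton_zero]
    simp
  | of_succ j hj ih =>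
    have hle : LinearMap.ker (LinearMap.mulLeft R γ) ≤ Ideal.span {γ ^ j} := by
      rw [ker_mulLeft_eq_span hs hmax hnil hnil']
      exact Ideal.span_singleton_le_span_singleton.2 (pow_dvd_pow γ (by omega))
    have hrange : LinearMap.range
        ((LinearMap.mulLeft R γ).comp (Ideal.span {γ ^ j} : Ideal R).subtype) =
          Ideal.span {γ ^ (j + 1)} := by
      rw [LinearMap.range_comp, Submodule.range_subtype, Ideal.span, Submodule.map_span,
        Set.image_singleton, LinearMap.mulLeft_apply, ← pow_succ', Ideal.span]
    rw [LinearMap.natCard_eq_ker_mul_range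
        ((LinearMap.mulLeft R γ).comp (Ideal.span {γ ^ j} : Ideal R).subtype), hrange, ih,
      LinearMap.ker_comp, Nat.card_congr (Submodule.comapSubtypeEquivOfLe hle).toEquiv,
      ker_mulLeft_eq_span hs hmax hnil hnil', natCard_span_pow_pred hs hmax hnil hnil' hq,
      ← pow_succ']
    congr 1
    omega

theorem wHom_isUnit_mul {u : R} (hu : IsUnit u) (y : R) :
    wHom γ s q (u * y) = wHom γ s q y := by
  have hzero : u * y = 0 ↔ y = 0 := hu.mul_right_eq_zero
  have hmem : u * y ∈ Ideal.span {γ ^ (s - 1)} ↔ y ∈ Ideal.span {γ ^ (s - 1)} := by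
    rw [Ideal.mem_span_singleton, Ideal.mem_span_singleton, hu.dvd_mul_left]
  classical
  unfold wHom
  exact if_congr hzero rfl (if_congr hmem rfl rfl)

/-- The homogeneous weight has the same average on every coset of the socle. -/
theorem sum_wHom_add_span_pow_pred (hs : 2 ≤ s)
    (hcard : Nat.card (Ideal.span ({γ ^ (s - 1)} : Set R)) = q)
    [Fintype (Ideal.span ({γ ^ (s - 1)} : Set R))] (y : R) :
    ∑ t : Ideal.span ({γ ^ (s - 1)} : Set R), wHom γ s q (y + t) =
      q * ((q - 1) * q ^ (s - 2)) := by
  classical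
  have hcard' := hcard
  rw [Nat.card_eq_fintype_card] at hcard'
  by_cases hy : y ∈ Ideal.span ({γ ^ (s - 1)} : Set R)
  · have htrans := Equiv.sum_comp (Equiv.addLeft (⟨y, hy⟩ : Ideal.span ({γ ^ (s - 1)} : Set R)))
      (fun t => wHom γ s q (t : R))
    simp only [Equiv.coe_addLeft, Submodule.coe_add] at htrans
    rw [htrans]
    have hval : ∀ t : Ideal.span ({γ ^ (s - 1)} : Set R),
        wHom γ s q (t : R) = if t = 0 then 0 else q ^ (s - 1) := by
      intro t
      simp only [wHom, t.2, if_true, Submodule.coe_eq_zero]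
    simp only [hval]
    rw [Finset.sum_ite, Finset.sum_const_zero, zero_add, Finset.sum_const, smul_eq_mul,
      Finset.filter_ne', Finset.card_erase_of_mem (Finset.mem_univ _), Finset.card_univ, hcard',
      show s - 1 = s - 2 + 1 by omega, pow_succ]
    ring
  · have hval : ∀ t : Ideal.span ({γ ^ (s - 1)} : Set R),
        wHom γ s q (y + t) = (q - 1) * q ^ (s - 2) := by
      intro t
      have hmem : y + t ∉ Ideal.span ({γ ^ (s - 1)} : Set R) := fun h =>
        hy ((Submodule.add_mem_iff_left _ t.2).1 h)
      have hne : y + t ≠ 0 := fun h => hmem (h ▸ Submodule.zero_mem _)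
      rw [wHom, if_neg hne, if_neg hmem]
    rw [Finset.sum_congr rfl fun t _ => hval t, Finset.sum_const, Finset.card_univ, hcard',
      smul_eq_mul]

/-- The homogeneous weight of a linear form averages to `(q - 1) * q ^ (s - 2)` whenever its
image contains the socle. -/
theorem sum_wHom_linearMap [Fintype R] (hs : 2 ≤ s) (hq0 : 0 < q)
    (hcard : Nat.card (Ideal.span ({γ ^ (s - 1)} : Set R)) = q)
    {M : Type*} [AddCommGroup M] [Module R M] [Fintype M] (f : M →ₗ[R] R)
    (hf : ∃ m, f m = γ ^ (s - 1)) :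
    ∑ m, wHom γ s q (f m) = Nat.card M * ((q - 1) * q ^ (s - 2)) := by
  classical
  obtain ⟨m₀, hm₀⟩ := hf
  have htrans : ∀ t : Ideal.span ({γ ^ (s - 1)} : Set R),
      ∑ m, wHom γ s q (f m + t) = ∑ m, wHom γ s q (f m) := by
    rintro ⟨t, ht⟩
    obtain ⟨r, rfl⟩ := Ideal.mem_span_singleton.1 ht
    rw [← Equiv.sum_comp (Equiv.addRight (r • m₀)) fun m => wHom γ s q (f m)]
    refine Finset.sum_congr rfl fun m _ => ?_
    rw [Equiv.coe_addRight, map_add, map_smul, hm₀, smul_eq_mul, mul_comm r]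
  have hswap := Finset.sum_comm (s := Finset.univ) (t := Finset.univ)
    (f := fun (t : Ideal.span ({γ ^ (s - 1)} : Set R)) (m : M) => wHom γ s q (f m + t))
  simp only [htrans, sum_wHom_add_span_pow_pred hs hcard, Finset.sum_const, Finset.card_univ,
    smul_eq_mul] at hswap
  rw [← Nat.card_eq_fintype_card, hcard, ← Nat.card_eq_fintype_card] at hswap
  apply Nat.eq_of_mul_eq_mul_left hq0
  rw [hswap]
  ring

/-- Summing a unit-invariant function over the vectors with a unit coordinate amounts to summing
it over a β-column set, once for each unit. -/
theorem IsBetaColumnSet.sum_filter_eq [Fintype R] {k : ℕ} {D : Finset (Fin k → R)}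
    (hD : IsBetaColumnSet D) [DecidablePred fun v : Fin k → R => ∃ i, IsUnit (v i)]
    (F : (Fin k → R) → ℕ) (hF : ∀ (u : Rˣ) v, F ((u : R) • v) = F v) :
    ∑ v with ∃ i, IsUnit (v i), F v = Nat.card Rˣ * ∑ g ∈ D, F g := by
  classical
  have hunit : ∀ (u : Rˣ), ∀ g ∈ D, ∃ i, IsUnit (((u : R) • g) i) := fun u g hg =>
    (hD.1 g hg).imp fun i hi => by simpa using hi
  have hbij : ∑ p ∈ (Finset.univ : Finset Rˣ) ×ˢ D, F p.2 =
      ∑ v with ∃ i, IsUnit (v i), F v := by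
    refine Finset.sum_bij (fun p _ => (p.1 : R) • p.2) ?_ ?_ ?_ ?_
    · intro p hp
      exact Finset.mem_filter.2 ⟨Finset.mem_univ _, hunit _ _ (Finset.mem_product.1 hp).2⟩
    · intro p hp p' hp' h
      have hp := (Finset.mem_product.1 hp).2
      have hp' := (Finset.mem_product.1 hp').2
      exact (hD.2 _ (hunit p.1 p.2 hp)).unique ⟨hp, rfl⟩ ⟨hp', h⟩
    · intro v hv
      obtain ⟨p, ⟨hp, rfl⟩, -⟩ := hD.2 v (Finset.mem_filter.1 hv).2
      exact ⟨p, Finset.mem_product.2 ⟨Finset.mem_univ _, hp⟩, rfl⟩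
    · intro p _
      exact (hF p.1 p.2).symm
  rw [← hbij, Finset.sum_product]
  dsimp only
  rw [Finset.sum_const, Finset.card_univ, smul_eq_mul,
    Nat.card_eq_fintype_card]

theorem natCard_units_add_natCard_maximalIdeal [IsLocalRing R] [Finite R] :
    Nat.card Rˣ + Nat.card (IsLocalRing.maximalIdeal R) = Nat.card R := by
  classical
  have hU : Nat.card Rˣ = Nat.card {x : R // IsUnit x} :=
    Nat.card_congr
      { toFun := fun u => ⟨u, u.isUnit⟩
        invFun := fun x => x.2.unit
        left_inv := fun _ => Units.ext rfl
        right_inv := fun _ => rfl }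
  have hm : Nat.card (IsLocalRing.maximalIdeal R) = Nat.card {x : R // ¬ IsUnit x} := rfl
  rw [hU, hm, ← Nat.card_sum, Nat.card_congr (Equiv.sumCompl _)]

/-- The submodule of `R^k` of vectors without unit coordinates. -/
def nonunitVectors (R : Type) [CommRing R] [IsLocalRing R] (k : ℕ) : Submodule R (Fin k → R) :=
  Submodule.pi Set.univ fun _ => IsLocalRing.maximalIdeal R

theorem mem_nonunitVectors [IsLocalRing R] {k : ℕ} {v : Fin k → R} :
    v ∈ nonunitVectors R k ↔ ¬ ∃ i, IsUnit (v i) := by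
  simp [nonunitVectors, Submodule.mem_pi]

theorem natCard_nonunitVectors [IsLocalRing R] (k : ℕ) :
    Nat.card (nonunitVectors R k) = Nat.card (IsLocalRing.maximalIdeal R) ^ k := by
  have e : nonunitVectors R k ≃ (Fin k → IsLocalRing.maximalIdeal R) :=
    { toFun := fun v i => ⟨v.1 i, v.2 i (Set.mem_univ i)⟩
      invFun := fun v => ⟨fun i => v i, fun i _ => (v i).2⟩
      left_inv := fun _ => rfl
      right_inv := fun _ => rfl }
  rw [Nat.card_congr e, Nat.card_fun]
  simp

theorem natCard_units_mul_sum_wHom_add [IsLocalRing R] [Fintype R] {k : ℕ}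
    {D : Finset (Fin k → R)} (hD : IsBetaColumnSet D) [Fintype (nonunitVectors R k)]
    (x : Fin k → R) :
    Nat.card Rˣ * ∑ g ∈ D, wHom γ s q (∑ i, x i * g i) +
      ∑ v : nonunitVectors R k, wHom γ s q (∑ i, x i * v.1 i) =
        ∑ v : Fin k → R, wHom γ s q (∑ i, x i * v i) := by
  classical
  rw [← hD.sum_filter_eq (fun v => wHom γ s q (∑ i, x i * v i)) ?_,
    ← Finset.sum_filter_add_sum_filter_not Finset.univ (fun v : Fin k → R => ∃ i, IsUnit (v i))]
  · congr 1
    exact (Finset.sum_subtype _ (fun v => by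
      rw [mem_nonunitVectors, Finset.mem_filter, and_iff_right (Finset.mem_univ v)])
      fun v : Fin k → R => wHom γ s q (∑ i, x i * v i)).symm
  · intro u v
    rw [← wHom_isUnit_mul u.isUnit (∑ i, x i * v i), Finset.mul_sum]
    congr 1
    refine Finset.sum_congr rfl fun i _ => ?_
    rw [Pi.smul_apply, smul_eq_mul]
    ring

theorem exists_sum_mul_eq [IsLocalRing R]
    (hmax : IsLocalRing.maximalIdeal R = Ideal.span {γ}) (hnil : γ ^ s = 0)
    {k : ℕ} {x : Fin k → R} (hx : x ≠ 0) :
    ∃ v : Fin k → R, ∑ i, x i * v i = γ ^ (s - 1) := by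
  classical
  obtain ⟨i, hi⟩ := Function.ne_iff.1 hx
  obtain ⟨r, hr⟩ := dvd_pow_pred_of_ne_zero hmax hnil hi
  exact ⟨Pi.single i r, by simp [Pi.single_apply, hr]⟩

theorem natCard_smul_eq_zero (γ : R) (k : ℕ) :
    Nat.card {x : Fin k → R // γ • x = 0} =
      Nat.card (LinearMap.ker (LinearMap.mulLeft R γ)) ^ k := by
  have e : {x : Fin k → R // γ • x = 0} ≃ (Fin k → LinearMap.ker (LinearMap.mulLeft R γ)) :=
    { toFun := fun x i => ⟨x.1 i, congrFun x.2 i⟩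
      invFun := fun x => ⟨fun i => x i, funext fun i => (x i).2⟩
      left_inv := fun _ => rfl
      right_inv := fun _ => rfl }
  rw [Nat.card_congr e, Nat.card_fun]
  simp

end ChainRing

/-- For `s ≥ 2`, `k ≥ 2` and a β-column set `D ⊆ R^k`: exactly `q^k − 1`
elements `x ∈ R^k` have homogeneous codeword weight `q^(sk−1)`, exactly `q^(sk) − q^k` have
weight `q^(sk−k−1)·(q^k − 1)`, and exactly one (namely `x = 0`) has weight `0`; the two
nonzero weights are distinct, and the minimum homogeneous weight of `S_k^β` is
`q^(sk−k−1)·(q^k − 1)`. -/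
theorem stmt_16
    (R : Type) [CommRing R] [IsLocalRing R] [Fintype R]
    (γ : R) (s q : ℕ)
    (hs : 2 ≤ s)
    (hmax : IsLocalRing.maximalIdeal R = Ideal.span {γ})
    (hnil : γ ^ s = 0)
    (hnil' : γ ^ (s - 1) ≠ 0)
    (hq : Nat.card (R ⧸ Ideal.span ({γ} : Set R)) = q)
    (k : ℕ) (hk : 2 ≤ k)
    (D : Finset (Fin k → R)) (hD : IsBetaColumnSet D) :
    Nat.card {x : Fin k → R //
        ∑ g ∈ D, wHom γ s q (∑ i, x i * g i) = q ^ (s * k - 1)} = q ^ k - 1 ∧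
    Nat.card {x : Fin k → R //
        ∑ g ∈ D, wHom γ s q (∑ i, x i * g i) = q ^ (s * k - k - 1) * (q ^ k - 1)}
      = q ^ (s * k) - q ^ k ∧
    Nat.card {x : Fin k → R // ∑ g ∈ D, wHom γ s q (∑ i, x i * g i) = 0} = 1 ∧
    q ^ (s * k - 1) ≠ q ^ (s * k - k - 1) * (q ^ k - 1) ∧
    (∀ x : Fin k → R, x ≠ 0 →
      q ^ (s * k - k - 1) * (q ^ k - 1) ≤ ∑ g ∈ D, wHom γ s q (∑ i, x i * g i)) ∧
    (∃ x : Fin k → R, x ≠ 0 ∧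
      ∑ g ∈ D, wHom γ s q (∑ i, x i * g i) = q ^ (s * k - k - 1) * (q ^ k - 1)) := by
  classical
  have hs1 : 1 ≤ s := by omega
  have hq2 : 2 ≤ q := by
    have hne : Ideal.span ({γ} : Set R) ≠ ⊤ := hmax ▸ (IsLocalRing.maximalIdeal.isMaximal R).ne_top
    have := Ideal.Quotient.nontrivial_iff.2 hne
    rw [← hq]
    exact Finite.one_lt_card
  have hsoc := natCard_span_pow_pred hs1 hmax hnil hnil' hq
  have hcardR : Nat.card R = q ^ s := by
    have h := natCard_span_pow hs1 hmax hnil hnil' hq (Nat.zero_le s)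
    rw [pow_zero, Ideal.span_singleton_one] at h
    rw [← Nat.card_congr (Submodule.topEquiv (R := R) (M := R)).toEquiv]
    exact h
  have hcardm : Nat.card (IsLocalRing.maximalIdeal R) = q ^ (s - 1) := by
    have h := natCard_span_pow hs1 hmax hnil hnil' hq hs1
    rwa [pow_one, ← hmax] at h
  have hcardV : Nat.card (Fin k → R) = q ^ (s * k) := by
    rw [Nat.card_fun, hcardR, Nat.card_fin, pow_mul]
  have hpow : q ^ s = q ^ (s - 1) * q := by rw [← pow_succ, Nat.sub_add_cancel hs1]
  have hpow' : q ^ (s - 1) = q ^ (s - 2) * q := by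
    rw [← pow_succ]; congr 1; omega
  have hunits : Nat.card Rˣ = q ^ (s - 2) * q * (q - 1) := by
    have h := natCard_units_add_natCard_maximalIdeal (R := R)
    rw [hcardm, hcardR, hpow, hpow'] at h
    obtain ⟨p, rfl⟩ := Nat.exists_eq_add_of_le' (by omega : 1 ≤ q)
    rw [Nat.add_sub_cancel]
    linarith
  have hc : 0 < (q - 1) * q ^ (s - 2) := by
    have : 0 < q - 1 := by omega
    positivity
  have hskk : k + 1 ≤ s * k := by nlinarith
  have hA : q ^ (s * k) = q * q ^ (s * k - 1) := by
    rw [← pow_succ']; congr 1; omega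
  have hB : q ^ (s * k - k) = q * q ^ (s * k - k - 1) := by
    rw [← pow_succ']; congr 1; omega
  have hAB : q ^ (s * k - 1) = q ^ (s * k - k - 1) * q ^ k := by
    rw [← pow_add]; congr 1; omega
  have hN : Nat.card (nonunitVectors R k) = q ^ (s * k - k) := by
    rw [natCard_nonunitVectors, hcardm, ← pow_mul, Nat.sub_mul, one_mul]
  have hqk : 1 < q ^ k := Nat.one_lt_pow (by omega) (by omega)
  set A := q ^ (s * k - 1)
  set b := q ^ (s * k - k - 1)
  have hb : 0 < b := by positivity
  have hB0 : 0 < b * (q ^ k - 1) := Nat.mul_pos hb (by omega)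
  have hlt : b * (q ^ k - 1) < A := by
    rw [hAB]
    exact Nat.mul_lt_mul_of_pos_left (by omega) hb
  have hall : ∀ x : Fin k → R, x ≠ 0 → ∑ v : Fin k → R, wHom γ s q (∑ i, x i * v i) =
      q ^ (s * k) * ((q - 1) * q ^ (s - 2)) := by
    intro x hx
    rw [← hcardV]
    exact sum_wHom_linearMap hs (by omega) hsoc (dotProductBilin R R x)
      (exists_sum_mul_eq hmax hnil hx)
  have hW0 : ∑ g ∈ D, wHom γ s q (∑ i, (0 : Fin k → R) i * g i) = 0 := by simp [wHom]
  have hWA : ∀ x : Fin k → R, x ≠ 0 → γ • x = 0 →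
      ∑ g ∈ D, wHom γ s q (∑ i, x i * g i) = A := by
    intro x hx hγx
    have h := natCard_units_mul_sum_wHom_add (γ := γ) (s := s) (q := q) hD x
    have hzero : ∑ v : nonunitVectors R k, wHom γ s q (∑ i, x i * v.1 i) = 0 := by
      refine Finset.sum_eq_zero fun v _ => ?_
      have : ∑ i, x i * v.1 i = 0 := by
        refine Finset.sum_eq_zero fun i _ => ?_
        obtain ⟨r, hr⟩ := (not_isUnit_iff_dvd hmax (v.1 i)).1
          fun hu => mem_nonunitVectors.1 v.2 ⟨i, hu⟩
        have hxi : γ * x i = 0 := congrFun hγx i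
        rw [hr, ← mul_assoc, mul_comm (x i), hxi, zero_mul]
      simp [this, wHom]
    rw [hzero, add_zero, hall x hx, hunits, hA] at h
    have hpos : 0 < q * ((q - 1) * q ^ (s - 2)) := by positivity
    apply Nat.eq_of_mul_eq_mul_left hpos
    linarith
  have hWB : ∀ x : Fin k → R, γ • x ≠ 0 →
      ∑ g ∈ D, wHom γ s q (∑ i, x i * g i) = b * (q ^ k - 1) := by
    intro x hγx
    have hx : x ≠ 0 := by rintro rfl; exact hγx (smul_zero γ)
    have h := natCard_units_mul_sum_wHom_add (γ := γ) (s := s) (q := q) hD x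
    have hsum : ∑ v : nonunitVectors R k, wHom γ s q (∑ i, x i * v.1 i) =
        q ^ (s * k - k) * ((q - 1) * q ^ (s - 2)) := by
      rw [← hN]
      refine sum_wHom_linearMap hs (by omega) hsoc
        ((dotProductBilin R R x).comp (nonunitVectors R k).subtype) ?_
      obtain ⟨v, hv⟩ := exists_sum_mul_eq hmax hnil hγx
      refine ⟨⟨γ • v, mem_nonunitVectors.2 ?_⟩, ?_⟩
      · rintro ⟨i, hi⟩
        exact (not_isUnit_iff_dvd hmax _).2 (Dvd.intro (v i) rfl) hi
      · rw [← hv]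
        change ∑ i, x i * (γ • v) i = ∑ i, (γ • x) i * v i
        refine Finset.sum_congr rfl fun i _ => ?_
        simp only [Pi.smul_apply, smul_eq_mul]
        ring
    rw [hsum, hall x hx, hunits, hA, hB, hAB] at h
    have hpos : 0 < q * ((q - 1) * q ^ (s - 2)) := by positivity
    apply Nat.eq_of_mul_eq_mul_left hpos
    obtain ⟨p, hp⟩ := Nat.exists_eq_add_of_le' hqk.le
    rw [hp] at h ⊢
    rw [Nat.add_sub_cancel]
    linarith
  have hker : Nat.card {x : Fin k → R // γ • x = 0} = q ^ k := by
    rw [natCard_smul_eq_zero, ker_mulLeft_eq_span hs1 hmax hnil hnil', hsoc]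
  have hiffA : ∀ x : Fin k → R,
      ∑ g ∈ D, wHom γ s q (∑ i, x i * g i) = A ↔ γ • x = 0 ∧ x ≠ 0 := by
    intro x
    rcases eq_or_ne x 0 with rfl | hx
    · rw [hW0]; simp only [ne_eq, not_true, and_false, iff_false]; omega
    by_cases hγx : γ • x = 0
    · simp [hWA x hx hγx, hγx, hx]
    · simp [hWB x hγx, hγx, hlt.ne]
  have hiffB : ∀ x : Fin k → R,
      ∑ g ∈ D, wHom γ s q (∑ i, x i * g i) = b * (q ^ k - 1) ↔ ¬ γ • x = 0 := by
    intro x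
    rcases eq_or_ne x 0 with rfl | hx
    · rw [hW0]; simp only [smul_zero, not_true, iff_false]; omega
    by_cases hγx : γ • x = 0
    · simp only [hWA x hx hγx, hγx, not_true, iff_false]; omega
    · simp [hWB x hγx, hγx]
  have hiff0 : ∀ x : Fin k → R, ∑ g ∈ D, wHom γ s q (∑ i, x i * g i) = 0 ↔ x = 0 := by
    intro x
    rcases eq_or_ne x 0 with rfl | hx
    · simp only [hW0]
    by_cases hγx : γ • x = 0
    · simp only [hWA x hx hγx, hx, iff_false]; omega
    · simp only [hWB x hγx, hx, iff_false]; omega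
  have hex : ∃ x : Fin k → R, γ • x ≠ 0 := by
    refine ⟨fun _ => 1, fun h => hnil' ?_⟩
    have hγ : γ = 0 := by simpa using congrFun h ⟨0, by omega⟩
    rw [hγ, zero_pow (by omega)]
  refine ⟨?_, ?_, ?_, hlt.ne', ?_, ?_⟩
  · rw [Nat.card_congr (Equiv.subtypeEquivRight hiffA), Nat.card_eq_fintype_card,
      Fintype.card_subtype, ← hker, Nat.card_eq_fintype_card, Fintype.card_subtype,
      ← Finset.card_erase_of_mem (a := (0 : Fin k → R)) (by simp)]
    congr 1
    ext x
    simp [and_comm]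
  · rw [Nat.card_congr (Equiv.subtypeEquivRight hiffB), Nat.card_eq_fintype_card,
      Fintype.card_subtype_compl, ← hcardV, ← hker, Nat.card_eq_fintype_card,
      Nat.card_eq_fintype_card]
  · rw [Nat.card_congr (Equiv.subtypeEquivRight hiff0)]
    simp
  · intro x hx
    by_cases hγx : γ • x = 0
    · rw [hWA x hx hγx]; exact hlt.le
    · rw [hWB x hγx]
  · obtain ⟨x, hx⟩ := hex
    exact ⟨x, by rintro rfl; exact hx (smul_zero γ), hWB x hx⟩
end
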